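/- arXiv:1703.01278 — 3 statements merged into one kernel-verified Lean document; each statement's English description precedes it below -/
import Mathlib

section
/- Let n ≥ 1, Λ > 0, Λ₀ ≥ 0, p > 2, m > 1 + n/p (so that p(m−1) > n), let Ω ⊆ ℝⁿ be open and T₀ < 0, and suppose u satisfies both D(Λ,A,f) and V(Λ,Λ₀,0) on (T₀,0)×Ω. Let α, β > 0 satisfy β ≤ α⁻¹, β ≤ α^{−(p−1)/(p−2)}, and β ≤ α^{−(p(m−1)+1)/(p(m−1)−n)}. Define v(t,x) := α·u(α^{p−1}β^p t, β x), A′(t,x) := α^{p−1}β^{p−2}·A(α^{p−1}β^p t, β x), f′(t,x) := α^p β^p·f(α^{p−1}β^p t, β x), and Λ₀′ := α^{p−1}β^{p−2}·Λ₀. Then v satisfies D(Λ,A′,f′) and V(Λ,Λ₀′,0) on (T₀/(α^{p−1}β^p), 0) × (1/β)Ω, and moreover Λ₀′ ≤ Λ₀, ‖A′‖_∞ ≤ ‖A‖_∞, and ‖f′‖ₘ ≤ ‖f‖ₘ. -/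
open MeasureTheory Filter Set
open scoped ENNReal NNReal Topology RealInnerProductSpace

noncomputable section

/-- The spatial domain `ℝⁿ`. -/
abbrev Spc (n : ℕ) := EuclideanSpace ℝ (Fin n)

/-- Space-time `ℝ × ℝⁿ`. -/
abbrev Spt (n : ℕ) := ℝ × Spc n

/-- Spatial gradient of a function on space-time. -/
def spaceGrad {n : ℕ} (φ : Spt n → ℝ) (z : Spt n) : Spc n :=
  WithLp.toLp 2 (fun i => fderiv ℝ φ z ((0 : ℝ), EuclideanSpace.single i (1 : ℝ)))

/-- Time derivative of a function on space-time. -/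
def timeDeriv {n : ℕ} (φ : Spt n → ℝ) (z : Spt n) : ℝ :=
  fderiv ℝ φ z ((1 : ℝ), 0)

/-- A smooth test function compactly supported inside `S`. -/
def IsTestOn {n : ℕ} (S : Set (Spt n)) (φ : Spt n → ℝ) : Prop :=
  ContDiff ℝ (⊤ : ℕ∞) φ ∧ HasCompactSupport φ ∧ tsupport φ ⊆ S

/-- `u` satisfies `∂ₜ u + Λ⁻¹ |∇u|^p − div(A ∇u) ≤ f` in the sense of distributions on
`(a,b) × Ω`, with essential boundedness, and with spatial weak gradient `G ∈ Lᵖ`. -/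
def SatD (n : ℕ) (p Λ : ℝ) (A : Spt n → Spc n →L[ℝ] Spc n) (f u : Spt n → ℝ)
    (G : Spt n → Spc n) (a b : ℝ) (Ω : Set (Spc n)) : Prop :=
  MemLp u ⊤ (volume.restrict (Ioo a b ×ˢ Ω)) ∧
  MemLp G (ENNReal.ofReal p) (volume.restrict (Ioo a b ×ˢ Ω)) ∧
  (∀ φ : Spt n → ℝ, IsTestOn (Ioo a b ×ˢ Ω) φ → ∀ i : Fin n,
    ∫ z in Ioo a b ×ˢ Ω, u z * fderiv ℝ φ z ((0 : ℝ), EuclideanSpace.single i (1 : ℝ))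
      = - ∫ z in Ioo a b ×ˢ Ω, G z i * φ z) ∧
  (∀ φ : Spt n → ℝ, IsTestOn (Ioo a b ×ˢ Ω) φ → (∀ z, 0 ≤ φ z) →
    ∫ z in Ioo a b ×ˢ Ω,
      (-(u z) * timeDeriv φ z + Λ⁻¹ * ‖G z‖ ^ p * φ z
        + ⟪A z (G z), spaceGrad φ z⟫ - f z * φ z) ≤ 0)

/-- Lower semicontinuous envelope. -/
def lscEnv {n : ℕ} (u : Spt n → ℝ) (z : Spt n) : ℝ := liminf u (𝓝 z)

/-- Second directional derivative of `g` at `x` in direction `v`. -/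
def secondDerivAlong {n : ℕ} (g : Spc n → ℝ) (x v : Spc n) : ℝ :=
  fderiv ℝ (fun y => fderiv ℝ g y v) x v

/-- `m⁻` of the spatial Hessian of `g` at `x`: the minimum of `0` and the least
eigenvalue (computed as the least Rayleigh quotient over unit directions). -/
def mMinusOf {n : ℕ} (g : Spc n → ℝ) (x : Spc n) : ℝ :=
  min 0 (sInf {r : ℝ | ∃ v : Spc n, ‖v‖ = 1 ∧ r = secondDerivAlong g x v})

/-- `u` satisfies `∂ₜ u + Λ |∇u|^p − Λ₀ m⁻(D²u) ≥ g` in the viscosity sense on the open set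
`U`, via its lower semicontinuous envelope. -/
def SatV (n : ℕ) (p Λ Λ₀ g : ℝ) (u : Spt n → ℝ) (U : Set (Spt n)) : Prop :=
  ∀ ψ : Spt n → ℝ, ∀ z₀ ∈ U,
    (∃ V ∈ 𝓝 z₀, ContDiffOn ℝ 2 ψ V) →
    IsLocalMin (fun z => lscEnv u z - ψ z) z₀ →
    g ≤ timeDeriv ψ z₀ + Λ * ‖spaceGrad ψ z₀‖ ^ p
        - Λ₀ * mMinusOf (fun x => ψ (z₀.1, x)) z₀.2

/-- Space-time scaling as a continuous linear equivalence. -/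
def Phi {n : ℕ} (c b : ℝ) (hc : c ≠ 0) (hb : b ≠ 0) : Spt n ≃L[ℝ] Spt n :=
  ContinuousLinearEquiv.equivOfInverse
    ((c • ContinuousLinearMap.id ℝ ℝ).prodMap (b • ContinuousLinearMap.id ℝ (Spc n)))
    ((c⁻¹ • ContinuousLinearMap.id ℝ ℝ).prodMap (b⁻¹ • ContinuousLinearMap.id ℝ (Spc n)))
    (fun z => by ext <;> simp [hc, hb])
    (fun z => by ext <;> simp [hc, hb])

lemma Phi_apply {n : ℕ} (c b : ℝ) (hc : c ≠ 0) (hb : b ≠ 0) (z : Spt n) :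
    Phi c b hc hb z = (c * z.1, b • z.2) := rfl

lemma Phi_symm_apply {n : ℕ} (c b : ℝ) (hc : c ≠ 0) (hb : b ≠ 0) (z : Spt n) :
    (Phi c b hc hb).symm z = (c⁻¹ * z.1, b⁻¹ • z.2) := rfl

lemma fderiv_comp_Phi_symm {n : ℕ} (c b : ℝ) (hc : c ≠ 0) (hb : b ≠ 0) (φ : Spt n → ℝ)
    (z y : Spt n) :
    fderiv ℝ (fun w => φ ((Phi c b hc hb).symm w)) (Phi c b hc hb z) y
      = fderiv ℝ φ z ((Phi c b hc hb).symm y) := by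
  have := (Phi (n := n) c b hc hb).symm.comp_right_fderiv (f := φ) (x := Phi c b hc hb z)
  have h2 : (fun w => φ ((Phi c b hc hb).symm w)) = φ ∘ (Phi c b hc hb).symm := rfl
  rw [h2, this]
  simp

lemma timeDeriv_comp {n : ℕ} (c b : ℝ) (hc : c ≠ 0) (hb : b ≠ 0) (φ : Spt n → ℝ)
    (z : Spt n) :
    timeDeriv (fun w => φ ((Phi c b hc hb).symm w)) (Phi c b hc hb z)
      = c⁻¹ * timeDeriv φ z := by
  unfold timeDeriv
  rw [fderiv_comp_Phi_symm, Phi_symm_apply]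
  have : ((c⁻¹ * ((1 : ℝ), (0 : Spc n)).1, b⁻¹ • ((1 : ℝ), (0 : Spc n)).2) : Spt n)
      = c⁻¹ • ((1 : ℝ), (0 : Spc n)) := by ext <;> simp
  rw [this, map_smul, smul_eq_mul]

lemma partial_comp {n : ℕ} (c b : ℝ) (hc : c ≠ 0) (hb : b ≠ 0) (φ : Spt n → ℝ)
    (z : Spt n) (x : Spc n) :
    fderiv ℝ (fun w => φ ((Phi c b hc hb).symm w)) (Phi c b hc hb z) ((0 : ℝ), x)
      = b⁻¹ * fderiv ℝ φ z ((0 : ℝ), x) := by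
  rw [fderiv_comp_Phi_symm, Phi_symm_apply]
  have : ((c⁻¹ * ((0 : ℝ), x).1, b⁻¹ • ((0 : ℝ), x).2) : Spt n)
      = b⁻¹ • ((0 : ℝ), x) := by ext <;> simp
  rw [this, map_smul, smul_eq_mul]

lemma spaceGrad_comp {n : ℕ} (c b : ℝ) (hc : c ≠ 0) (hb : b ≠ 0) (φ : Spt n → ℝ)
    (z : Spt n) :
    spaceGrad (fun w => φ ((Phi c b hc hb).symm w)) (Phi c b hc hb z)
      = b⁻¹ • spaceGrad φ z := by
  ext i
  simp only [spaceGrad, partial_comp]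
  simp

lemma isTestOn_comp {n : ℕ} (c b : ℝ) (hc : c ≠ 0) (hb : b ≠ 0) (φ : Spt n → ℝ)
    (S : Set (Spt n)) (h : IsTestOn (Phi c b hc hb ⁻¹' S) φ) :
    IsTestOn S (fun w => φ ((Phi c b hc hb).symm w)) := by
  obtain ⟨h1, h2, h3⟩ := h
  refine ⟨h1.comp (Phi c b hc hb).symm.contDiff,
    h2.comp_homeomorph (Phi c b hc hb).symm.toHomeomorph, ?_⟩
  have := tsupport_comp_eq_preimage φ (Phi (n := n) c b hc hb).symm.toHomeomorph
  intro w hw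
  have hw' : (Phi c b hc hb).symm w ∈ tsupport φ := by
    have h4 : w ∈ tsupport (φ ∘ (Phi (n := n) c b hc hb).symm.toHomeomorph) := hw
    rw [this] at h4
    exact h4
  have := h3 hw'
  simpa using this

lemma map_Phi {n : ℕ} (c b : ℝ) (hc : 0 < c) (hb : 0 < b) :
    (volume : Measure (Spt n)).map (Phi c b hc.ne' hb.ne')
      = ENNReal.ofReal (c * b ^ n)⁻¹ • volume := by
  have e : ⇑(Phi (n := n) c b hc.ne' hb.ne') = Prod.map (c * ·) (b • ·) := rfl
  rw [e, Measure.volume_eq_prod, ← Measure.map_prod_map _ _ (by fun_prop) (by fun_prop),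
    Real.map_volume_mul_left hc.ne', Measure.map_addHaar_smul _ hb.ne',
    Measure.prod_smul_left, Measure.prod_smul_right, smul_smul,
    ← ENNReal.ofReal_mul (abs_nonneg _), ← abs_mul, ← mul_inv]
  simp only [finrank_euclideanSpace, Fintype.card_fin]
  rw [abs_of_pos (by positivity)]

lemma map_restrict_Phi {n : ℕ} (c b : ℝ) (hc : 0 < c) (hb : 0 < b) (S : Set (Spt n)) :
    (volume.restrict (Phi c b hc.ne' hb.ne' ⁻¹' S)).map (Phi c b hc.ne' hb.ne')
      = ENNReal.ofReal (c * b ^ n)⁻¹ • volume.restrict S := by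
  have := map_Phi (n := n) c b hc hb
  refine ((Phi (n := n) c b hc.ne' hb.ne').toHomeomorph.measurableEmbedding.restrict_map
    volume S).symm.trans ?_
  change (Measure.map (Phi c b hc.ne' hb.ne') volume).restrict S = _
  rw [this, Measure.restrict_smul]

lemma integral_Phi {n : ℕ} (c b : ℝ) (hc : 0 < c) (hb : 0 < b) (S : Set (Spt n))
    (g : Spt n → ℝ) :
    ∫ z in Phi c b hc.ne' hb.ne' ⁻¹' S, g (Phi c b hc.ne' hb.ne' z)
      = (c * b ^ n)⁻¹ * ∫ z in S, g z := by
  have := (Phi (n := n) c b hc.ne' hb.ne').toHomeomorph.measurableEmbedding.integral_map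
    (μ := volume.restrict (Phi c b hc.ne' hb.ne' ⁻¹' S)) g
  refine this.symm.trans ?_
  change ∫ y, g y ∂(Measure.map (Phi c b hc.ne' hb.ne') _) = _
  rw [map_restrict_Phi c b hc hb, integral_smul_measure, ENNReal.toReal_ofReal (by positivity), smul_eq_mul]

lemma integral_Phi2 {n : ℕ} (c b k : ℝ) (hc : 0 < c) (hb : 0 < b) (S : Set (Spt n))
    (g : Spt n → ℝ) :
    ∫ z in Phi c b hc.ne' hb.ne' ⁻¹' S, k * g (Phi c b hc.ne' hb.ne' z)
      = (c * b ^ n)⁻¹ * (k * ∫ z in S, g z) := by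
  rw [← integral_const_mul]
  exact integral_Phi c b hc hb S (fun z => k * g z)

lemma eLpNorm_Phi {n : ℕ} {E : Type*} [NormedAddCommGroup E] (c b : ℝ) (hc : 0 < c) (hb : 0 < b)
    (S : Set (Spt n)) (g : Spt n → E) (q : ℝ≥0∞) :
    eLpNorm (fun z => g (Phi c b hc.ne' hb.ne' z)) q
        (volume.restrict (Phi c b hc.ne' hb.ne' ⁻¹' S))
      = ENNReal.ofReal (c * b ^ n)⁻¹ ^ (1 / q).toReal * eLpNorm g q (volume.restrict S) := by
  have := (Phi (n := n) c b hc.ne' hb.ne').toHomeomorph.measurableEmbedding.eLpNorm_map_measure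
    (μ := volume.restrict (Phi c b hc.ne' hb.ne' ⁻¹' S)) (g := g) (p := q)
  refine this.symm.trans ?_
  change eLpNorm g q (Measure.map (Phi c b hc.ne' hb.ne') _) = _
  rw [map_restrict_Phi c b hc hb, eLpNorm_smul_measure_of_ne_zero, smul_eq_mul]
  simp only [ne_eq, ENNReal.ofReal_eq_zero, not_le]
  positivity

lemma memLp_Phi {n : ℕ} {E : Type*} [NormedAddCommGroup E] (c b : ℝ) (hc : 0 < c) (hb : 0 < b)
    (S : Set (Spt n)) (g : Spt n → E) (q : ℝ≥0∞) (h : MemLp g q (volume.restrict S)) :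
    MemLp (fun z => g (Phi c b hc.ne' hb.ne' z)) q
        (volume.restrict (Phi c b hc.ne' hb.ne' ⁻¹' S)) := by
  have := (Phi (n := n) c b hc.ne' hb.ne').toHomeomorph.measurableEmbedding.memLp_map_measure_iff
    (μ := volume.restrict (Phi c b hc.ne' hb.ne' ⁻¹' S)) (g := g) (p := q)
  refine this.1 ?_
  change MemLp g q (Measure.map (Phi c b hc.ne' hb.ne') _)
  rw [map_restrict_Phi c b hc hb]
  exact h.smul_measure ENNReal.ofReal_ne_top

lemma lscEnv_comp {n : ℕ} (c b a : ℝ) (hc : c ≠ 0) (hb : b ≠ 0) (ha : 0 < a) (u : Spt n → ℝ)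
    (z : Spt n) :
    lscEnv (fun w => a * u (Phi c b hc hb w)) z = a * lscEnv u (Phi c b hc hb z) := by
  unfold lscEnv
  rw [liminf_eq, liminf_eq, ← smul_eq_mul, ← Real.sSup_smul_of_nonneg ha.le]
  congr 1
  ext r
  rw [Set.mem_smul_set_iff_inv_smul_mem₀ ha.ne']
  have := (Phi (n := n) c b hc hb).toHomeomorph.map_nhds_eq z
  change map (Phi c b hc hb) (𝓝 z) = 𝓝 (Phi c b hc hb z) at this
  simp only [mem_ofPred_eq, ← this, eventually_map, smul_eq_mul, inv_mul_le_iff₀ ha]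

open scoped Pointwise in
lemma mMinusOf_scale {n : ℕ} (a d : ℝ) (ha : 0 < a) (hd : 0 < d) (g : Spc n → ℝ) (x : Spc n) :
    mMinusOf (fun y => a * g (d • y)) x = a * d ^ 2 * mMinusOf g (d • x) := by
  have key : ∀ v, secondDerivAlong (fun y => a * g (d • y)) x v
      = a * d ^ 2 * secondDerivAlong g (d • x) v := by
    intro v
    unfold secondDerivAlong
    have h1 : (fun y => fderiv ℝ (fun y => a * g (d • y)) y v)
        = (a * d) • fun y => (fun w => fderiv ℝ g w v) (d • y) := by
      funext y
      have h0 : (fun y => a * g (d • y)) = a • fun y => g (d • y) := rfl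
      rw [h0, fderiv_const_smul_field, Pi.smul_apply, fderiv_comp_smul]
      simp [mul_assoc]
    rw [h1, fderiv_const_smul_field, Pi.smul_apply, fderiv_comp_smul (f := fun w => fderiv ℝ g w v)]
    simp
    ring
  unfold mMinusOf
  have hs : {r : ℝ | ∃ v : Spc n, ‖v‖ = 1 ∧ r = secondDerivAlong (fun y => a * g (d • y)) x v}
      = (a * d ^ 2) • {r : ℝ | ∃ v : Spc n, ‖v‖ = 1 ∧ r = secondDerivAlong g (d • x) v} := by
    ext r
    simp only [key, mem_ofPred_eq, Set.mem_smul_set, smul_eq_mul]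
    constructor
    · rintro ⟨v, hv, rfl⟩
      exact ⟨_, ⟨v, hv, rfl⟩, rfl⟩
    · rintro ⟨_, ⟨v, hv, rfl⟩, rfl⟩
      exact ⟨v, hv, rfl⟩
  have hp : 0 ≤ a * d ^ 2 := by positivity
  rw [hs, Real.sInf_smul_of_nonneg hp, smul_eq_mul, mul_min_of_nonneg _ _ hp, mul_zero]

lemma satV_scale {n : ℕ} (p Λ Λ₀ a b c : ℝ) (ha : 0 < a) (hb : 0 < b) (hc : 0 < c)
    (hac : a * c = (a * b) ^ p)
    (u : Spt n → ℝ) (U : Set (Spt n)) (h : SatV n p Λ Λ₀ 0 u U) :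
    SatV n p Λ (c * (b ^ 2)⁻¹ * Λ₀) 0 (fun z => a * u (Phi c b hc.ne' hb.ne' z))
      (Phi c b hc.ne' hb.ne' ⁻¹' U) := by
  intro ψ z₀ hz ⟨V, hV, hψ⟩ hmin
  set F := Phi (n := n) c b hc.ne' hb.ne' with hF
  have hcont : Tendsto F.symm (𝓝 (F z₀)) (𝓝 z₀) := by
    have := F.symm.continuous.tendsto (F z₀)
    simpa using this
  have hm : IsLocalMin (fun z => lscEnv u z - (a⁻¹ • fun w => ψ (F.symm w)) z) (F z₀) := by
    have h2 := hcont.eventually hmin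
    filter_upwards [h2] with w hw
    simp only [lscEnv_comp c b a hc.ne' hb.ne' ha, hF] at hw
    simp only [← hF, ContinuousLinearEquiv.apply_symm_apply] at hw
    simp only [Pi.smul_apply, smul_eq_mul, ContinuousLinearEquiv.symm_apply_apply]
    have e : ∀ x y : ℝ, x - a⁻¹ * y = a⁻¹ * (a * x - y) := by intro x y; field_simp
    rw [e, e]
    gcongr
  have hreg : ∃ V ∈ 𝓝 (F z₀), ContDiffOn ℝ 2 (a⁻¹ • fun w => ψ (F.symm w)) V := by
    refine ⟨F.symm ⁻¹' V, hcont hV, ?_⟩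
    exact (hψ.comp F.symm.contDiff.contDiffOn (fun _ hx => hx)).const_smul a⁻¹
  have := h _ (F z₀) hz hreg hm
  have t1 : timeDeriv (a⁻¹ • fun w => ψ (F.symm w)) (F z₀) = a⁻¹ * (c⁻¹ * timeDeriv ψ z₀) := by
    rw [← timeDeriv_comp c b hc.ne' hb.ne' ψ z₀]
    unfold timeDeriv
    rw [fderiv_const_smul_field]
    rfl
  have t2 : spaceGrad (a⁻¹ • fun w => ψ (F.symm w)) (F z₀) = (a * b)⁻¹ • spaceGrad ψ z₀ := by
    rw [mul_inv, ← smul_smul, ← spaceGrad_comp c b hc.ne' hb.ne' ψ z₀]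
    unfold spaceGrad
    rw [fderiv_const_smul_field]
    rfl
  have t3 : mMinusOf (fun x => (a⁻¹ • fun w => ψ (F.symm w)) ((F z₀).1, x)) (F z₀).2
      = a⁻¹ * b⁻¹ ^ 2 * mMinusOf (fun x => ψ (z₀.1, x)) z₀.2 := by
    have e : (fun x => (a⁻¹ • fun w => ψ (F.symm w)) ((F z₀).1, x))
        = fun x => a⁻¹ * (fun x => ψ (z₀.1, x)) (b⁻¹ • x) := by
      funext x
      simp [hF, Phi_apply, Phi_symm_apply, hc.ne']
    rw [e, mMinusOf_scale a⁻¹ b⁻¹ (by positivity) (by positivity) (fun x => ψ (z₀.1, x))]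
    simp [hF, Phi_apply, hb.ne']
  have hab : 0 < a * b := by positivity
  rw [t1, t2, t3, norm_smul, Real.norm_of_nonneg (by positivity),
    Real.mul_rpow (by positivity) (norm_nonneg _), Real.inv_rpow hab.le, ← hac] at this
  have h3 := mul_nonneg (mul_pos ha hc).le this
  refine h3.trans_eq ?_
  field_simp

lemma satD_scale {n : ℕ} (p Λ a b c : ℝ) (ha : 0 < a) (hb : 0 < b) (hc : 0 < c)
    (hac : a * c = (a * b) ^ p) (A : Spt n → Spc n →L[ℝ] Spc n) (f u : Spt n → ℝ)
    (G : Spt n → Spc n) (s t s' t' : ℝ) (Ω Ω' : Set (Spc n))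
    (hS : Ioo s' t' ×ˢ Ω' = Phi c b hc.ne' hb.ne' ⁻¹' (Ioo s t ×ˢ Ω))
    (h : SatD n p Λ A f u G s t Ω) :
    SatD n p Λ (fun z => (c * (b ^ 2)⁻¹) • A (Phi c b hc.ne' hb.ne' z))
      (fun z => (a * c) * f (Phi c b hc.ne' hb.ne' z))
      (fun z => a * u (Phi c b hc.ne' hb.ne' z))
      (fun z => (a * b) • G (Phi c b hc.ne' hb.ne' z)) s' t' Ω' := by
  obtain ⟨h1, h2, h3, h4⟩ := h
  unfold SatD
  rw [hS]
  set F := Phi (n := n) c b hc.ne' hb.ne' with hF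
  refine ⟨(memLp_Phi c b hc hb _ u _ h1).const_mul a,
    (memLp_Phi c b hc hb _ G _ h2).const_smul (a * b), ?_, ?_⟩
  · intro φ hφ i
    have := h3 _ (isTestOn_comp c b hc.ne' hb.ne' φ _ hφ) i
    have e1 := integral_Phi2 c b (a * b) hc hb (Ioo s t ×ˢ Ω) (fun w => u w *
      fderiv ℝ (fun w => φ (F.symm w)) w ((0 : ℝ), EuclideanSpace.single i (1 : ℝ)))
    have e2 := integral_Phi2 c b (a * b) hc hb (Ioo s t ×ˢ Ω) (fun w => G w i * φ (F.symm w))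
    replace e1 := e1.trans (congrArg (fun x => (c * b ^ n)⁻¹ * (a * b * x)) this)
    have l1 : ∀ z, a * u (F z) * fderiv ℝ φ z ((0 : ℝ), EuclideanSpace.single i (1 : ℝ))
        = a * b * (u (F z) *
      fderiv ℝ (fun w => φ (F.symm w)) (F z) ((0 : ℝ), EuclideanSpace.single i (1 : ℝ))) := by
      intro z
      rw [hF, partial_comp]
      field_simp
    have l2 : ∀ z, ((a * b) • G (F z)) i * φ z = a * b * (G (F z) i * φ (F.symm (F z))) := by
      intro z
      simp
      ring
    simp only [l1, l2]
    refine e1.trans ?_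
    refine Eq.trans ?_ (congrArg Neg.neg e2).symm
    simp only [hF]
    ring
  · intro φ hφ hpos
    have := h4 _ (isTestOn_comp c b hc.ne' hb.ne' φ _ hφ) (fun z => hpos _)
    have e1 := integral_Phi2 c b (a * c) hc hb (Ioo s t ×ˢ Ω) (fun z =>
      (-(u z) * timeDeriv (fun w => φ (F.symm w)) z + Λ⁻¹ * ‖G z‖ ^ p * φ (F.symm z)
        + ⟪A z (G z), spaceGrad (fun w => φ (F.symm w)) z⟫ - f z * φ (F.symm z)))
    refine (le_of_eq ?_).trans (e1.le.trans ?_)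
    · congr 1
      funext z
      rw [hF, timeDeriv_comp, spaceGrad_comp, ContinuousLinearEquiv.symm_apply_apply, norm_smul,
        Real.norm_of_nonneg (by positivity), Real.mul_rpow (by positivity) (norm_nonneg _), ← hac]
      simp only [_root_.smul_apply, map_smul, inner_smul_left, inner_smul_right]
      simp
      field_simp
    · have : 0 ≤ (c * b ^ n)⁻¹ * (a * c) := by positivity
      rw [← mul_assoc]
      exact mul_nonpos_of_nonneg_of_nonpos this (by assumption)

/-- **First scaling lemma.** If `u` solves both inequalities on `(T₀,0)×Ω` and
`β ≤ α⁻¹`, `β ≤ α^{−(p−1)/(p−2)}`, `β ≤ α^{−(p(m−1)+1)/(p(m−1)−n)}`, then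
`v(t,x) = α u(α^{p−1}β^p t, βx)` solves the corresponding inequalities on
`(T₀/(α^{p−1}β^p), 0) × (1/β)Ω` with `A′ = α^{p−1}β^{p−2}A(...)`, `f′ = α^pβ^p f(...)`,
`Λ₀′ = α^{p−1}β^{p−2}Λ₀ ≤ Λ₀`, `‖A′‖_∞ ≤ ‖A‖_∞` and `‖f′‖_m ≤ ‖f‖_m`. -/
theorem scaling_lemma_one
    (n : ℕ) (hn : 1 ≤ n) (Λ Λ₀ p m : ℝ)
    (hΛ : 0 < Λ) (hΛ₀ : 0 ≤ Λ₀) (hp : 2 < p) (hm : 1 + (n : ℝ) / p < m)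
    (Ω : Set (Spc n)) (hΩ : IsOpen Ω) (T₀ : ℝ) (hT₀ : T₀ < 0)
    (A : Spt n → Spc n →L[ℝ] Spc n) (f u : Spt n → ℝ) (G : Spt n → Spc n)
    (hD : SatD n p Λ A f u G T₀ 0 Ω)
    (hV : SatV n p Λ Λ₀ 0 u (Ioo T₀ 0 ×ˢ Ω))
    (α β : ℝ) (hα : 0 < α) (hβ : 0 < β)
    (h1 : β ≤ α⁻¹) (h2 : β ≤ α ^ (-(p - 1) / (p - 2)))
    (h3 : β ≤ α ^ (-(p * (m - 1) + 1) / (p * (m - 1) - (n : ℝ)))) :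
    SatD n p Λ
        (fun z => (α ^ (p - 1) * β ^ (p - 2)) • A (α ^ (p - 1) * β ^ p * z.1, β • z.2))
        (fun z => α ^ p * β ^ p * f (α ^ (p - 1) * β ^ p * z.1, β • z.2))
        (fun z => α * u (α ^ (p - 1) * β ^ p * z.1, β • z.2))
        (fun z => (α * β) • G (α ^ (p - 1) * β ^ p * z.1, β • z.2))
        (T₀ / (α ^ (p - 1) * β ^ p)) 0 ((fun x : Spc n => β • x) ⁻¹' Ω) ∧
    SatV n p Λ (α ^ (p - 1) * β ^ (p - 2) * Λ₀) 0
        (fun z => α * u (α ^ (p - 1) * β ^ p * z.1, β • z.2))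
        (Ioo (T₀ / (α ^ (p - 1) * β ^ p)) 0 ×ˢ ((fun x : Spc n => β • x) ⁻¹' Ω)) ∧
    α ^ (p - 1) * β ^ (p - 2) * Λ₀ ≤ Λ₀ ∧
    eLpNorm (fun z : Spt n =>
        (α ^ (p - 1) * β ^ (p - 2)) • A (α ^ (p - 1) * β ^ p * z.1, β • z.2)) ⊤
        (volume.restrict
          (Ioo (T₀ / (α ^ (p - 1) * β ^ p)) 0 ×ˢ ((fun x : Spc n => β • x) ⁻¹' Ω)))
      ≤ eLpNorm A ⊤ (volume.restrict (Ioo T₀ 0 ×ˢ Ω)) ∧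
    eLpNorm (fun z : Spt n =>
        α ^ p * β ^ p * f (α ^ (p - 1) * β ^ p * z.1, β • z.2)) (ENNReal.ofReal m)
        (volume.restrict
          (Ioo (T₀ / (α ^ (p - 1) * β ^ p)) 0 ×ˢ ((fun x : Spc n => β • x) ⁻¹' Ω)))
      ≤ eLpNorm f (ENNReal.ofReal m) (volume.restrict (Ioo T₀ 0 ×ˢ Ω)) := by
  have hp0 : 0 < p := by linarith
  have hαβ : 0 < α * β := by positivity
  set c := α ^ (p - 1) * β ^ p with hc_def
  have hc : 0 < c := by positivity
  have hac' : α * c = α ^ p * β ^ p := by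
    rw [hc_def, Real.rpow_sub_one hα.ne']; field_simp
  have hac : α * c = (α * β) ^ p := by rw [hac', Real.mul_rpow hα.le hβ.le]
  have hcb : α ^ (p - 1) * β ^ (p - 2) = c * (β ^ 2)⁻¹ := by
    rw [hc_def, Real.rpow_sub hβ]
    norm_cast
    ring
  have hS : Ioo (T₀ / c) 0 ×ˢ ((fun x : Spc n => β • x) ⁻¹' Ω)
      = Phi c β hc.ne' hβ.ne' ⁻¹' (Ioo T₀ 0 ×ˢ Ω) := by
    ext z
    simp only [mem_prod, mem_Ioo, mem_preimage, Phi_apply, div_lt_iff₀ hc, mul_comm c]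
    have : z.1 < 0 ↔ z.1 * c < 0 := by
      constructor
      · intro h; exact mul_neg_of_neg_of_pos h hc
      · intro h; by_contra h'; push Not at h'
        exact absurd h (not_lt.2 (mul_nonneg h' hc.le))
    rw [← this]
  have hk1 : α ^ (p - 1) * β ^ (p - 2) ≤ 1 := by
    have hq : 0 < p - 2 := by linarith
    have := Real.rpow_le_rpow hβ.le h2 hq.le
    rw [← Real.rpow_mul hα.le, div_mul_cancel₀ _ hq.ne', Real.rpow_neg hα.le] at this
    calc _ ≤ α ^ (p - 1) * (α ^ (p - 1))⁻¹ := by gcongr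
      _ = 1 := mul_inv_cancel₀ (by positivity)
  have hk0 : 0 ≤ α ^ (p - 1) * β ^ (p - 2) := by positivity
  refine ⟨?_, ?_, ?_, ?_, ?_⟩
  · rw [hcb, ← hac']
    exact satD_scale p Λ α β c hα hβ hc hac A f u G T₀ 0 _ _ Ω _ hS hD
  · rw [hcb, hS]
    exact satV_scale p Λ Λ₀ α β c hα hβ hc hac u _ hV
  · exact mul_le_of_le_one_left hΛ₀ hk1
  · rw [hS]
    have e := eLpNorm_Phi c β hc hβ (Ioo T₀ 0 ×ˢ Ω) A ⊤
    refine (eLpNorm_const_smul_le (c := α ^ (p - 1) * β ^ (p - 2))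
      (f := fun z => A (Phi c β hc.ne' hβ.ne' z))).trans ?_
    rw [e]
    have : ‖α ^ (p - 1) * β ^ (p - 2)‖ₑ ≤ 1 := by
      rw [Real.enorm_of_nonneg hk0]
      exact ENNReal.ofReal_le_one.2 hk1
    simpa using mul_le_mul_left this (eLpNorm A ⊤ (volume.restrict (Ioo T₀ 0 ×ˢ Ω)))
  · rw [hS]
    have hm0 : 0 < m := by
      have : 0 ≤ (n : ℝ) / p := by positivity
      linarith
    have e := eLpNorm_Phi c β hc hβ (Ioo T₀ 0 ×ˢ Ω) f (ENNReal.ofReal m)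
    refine (eLpNorm_const_smul_le (c := α ^ p * β ^ p)
      (f := fun z => f (Phi c β hc.ne' hβ.ne' z))).trans ?_
    rw [e, ← mul_assoc]
    refine mul_le_of_le_one_left zero_le ?_
    have h1m : (1 / ENNReal.ofReal m).toReal = m⁻¹ := by
      rw [one_div, ENNReal.toReal_inv, ENNReal.toReal_ofReal hm0.le]
    rw [h1m, Real.enorm_of_nonneg (by positivity),
      ENNReal.ofReal_rpow_of_nonneg (by positivity) (by positivity),
      ← ENNReal.ofReal_mul (by positivity)]
    refine ENNReal.ofReal_le_one.2 ?_
    have hD0 : 0 < p * (m - 1) - n := by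
      have : (n : ℝ) / p < m - 1 := by linarith
      rw [div_lt_iff₀ hp0] at this
      linarith
    have hb := Real.rpow_le_rpow hβ.le h3 hD0.le
    rw [← Real.rpow_mul hα.le, div_mul_cancel₀ _ hD0.ne', Real.rpow_neg hα.le] at hb
    have hfin : α ^ (p * (m - 1) + 1) * β ^ (p * (m - 1) - n) ≤ 1 := by
      calc _ ≤ α ^ (p * (m - 1) + 1) * (α ^ (p * (m - 1) + 1))⁻¹ := by gcongr
        _ = 1 := mul_inv_cancel₀ (by positivity)
    have hmm : (α ^ p * β ^ p) = ((α ^ p * β ^ p) ^ m) ^ m⁻¹ := by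
      rw [← Real.rpow_mul (by positivity), mul_inv_cancel₀ hm0.ne', Real.rpow_one]
    rw [hmm, ← Real.mul_rpow (by positivity) (by positivity)]
    refine Real.rpow_le_one (by positivity) ?_ (by positivity)
    refine le_trans (le_of_eq ?_) hfin
    rw [Real.mul_rpow (by positivity) (by positivity), ← Real.rpow_mul hα.le,
      ← Real.rpow_mul hβ.le, hc_def, ← Real.rpow_natCast β n, mul_assoc (α ^ (p - 1)),
      ← Real.rpow_add hβ, mul_inv, ← Real.rpow_neg hα.le, ← Real.rpow_neg hβ.le,
      mul_mul_mul_comm, ← Real.rpow_add hα, ← Real.rpow_add hβ]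
    congr 2 <;> ring
end
end

section
/- Let n ≥ 1, p > 2, Λ > 0, and let β: [0,∞) → ℝ be a smooth function supported in [0,1] and identically equal to 1 on [0,1/2]. There exists a constant K₀ ∈ (0,1), depending only on Λ, p, n and β, such that for every λ ∈ (0,K₀] and every Λ₀ ∈ [0, λ²K₀], the smooth function σ(t,x) := −2 + λ²·β(|x|/λ) − (λ²/8)·t on ℝ×ℝⁿ satisfies, at every point (t,x) ∈ ℝ×ℝⁿ, the pointwise inequality ∂_t σ(t,x) + Λ|∇σ(t,x)|ᵖ − Λ₀·m⁻(D²σ(t,x)) ≤ 0, where D²σ(t,x) denotes the spatial Hessian of σ at (t,x) and m⁻(M) := min(0, least eigenvalue of the symmetric matrix M). -/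
open MeasureTheory Filter Set
open scoped ENNReal NNReal Topology RealInnerProductSpace

noncomputable section

theorem aux_two : (1 + 1 : WithTop ℕ∞) ≤ ((⊤ : ℕ∞) : WithTop ℕ∞) := by
  rw [one_add_one_eq_two]
  exact WithTop.coe_le_coe.2 (le_top : (2 : ℕ∞) ≤ ⊤)

theorem aux_smooth {n : ℕ} (B : ℝ → ℝ) (hB : ContDiffOn ℝ (⊤ : ℕ∞) B (Ici 0))
    (hB1 : ∀ r ∈ Icc (0 : ℝ) (1 / 2), B r = 1) :
    ContDiff ℝ (⊤ : ℕ∞) (fun y : Spc n => B ‖y‖) := by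
  rw [contDiff_iff_contDiffAt]
  intro y
  by_cases hy : y = 0
  · have h : (fun y : Spc n => B ‖y‖) =ᶠ[𝓝 y] fun _ => (1 : ℝ) := by
      subst hy
      filter_upwards [Metric.ball_mem_nhds (0 : Spc n) (by norm_num : (0 : ℝ) < 1 / 2)] with w hw
      rw [mem_ball_zero_iff] at hw
      exact hB1 _ ⟨norm_nonneg _, hw.le⟩
    exact contDiffAt_const.congr_of_eventuallyEq h
  · have h1 : ContDiffAt ℝ (⊤ : ℕ∞) B ‖y‖ :=
      hB.contDiffAt (Ici_mem_nhds (norm_pos_iff.2 hy))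
    exact h1.comp y (contDiffAt_norm ℝ hy)

theorem aux_supp {n : ℕ} (B : ℝ → ℝ) (hB0 : ∀ r : ℝ, 1 < r → B r = 0) :
    HasCompactSupport (fun y : Spc n => B ‖y‖) := by
  refine HasCompactSupport.intro (isCompact_closedBall (0 : Spc n) 1) ?_
  intro x hx
  rw [mem_closedBall_zero_iff, not_le] at hx
  exact hB0 _ hx

theorem aux_mMinus {n : ℕ} (g : Spc n → ℝ) (x : Spc n) (C : ℝ) (hC : 0 ≤ C)
    (h : ∀ v : Spc n, ‖v‖ = 1 → |secondDerivAlong g x v| ≤ C) : -C ≤ mMinusOf g x := by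
  unfold mMinusOf
  refine le_min (by linarith) ?_
  rcases Set.eq_empty_or_nonempty
    {r : ℝ | ∃ v : Spc n, ‖v‖ = 1 ∧ r = secondDerivAlong g x v} with he | hne
  · rw [he, Real.sInf_empty]; linarith
  · refine le_csInf hne ?_
    rintro r ⟨v, hv, rfl⟩
    exact (abs_le.1 (h v hv)).1

theorem aux_fderiv {n : ℕ} (g : Spc n → ℝ) (hg : Differentiable ℝ g) (lam c : ℝ) (hl : 0 < lam)
    (y v : Spc n) :
    fderiv ℝ (fun x : Spc n => -2 + lam ^ 2 * g (lam⁻¹ • x) - c) y v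
      = lam * fderiv ℝ g (lam⁻¹ • y) v := by
  have h1 : HasFDerivAt (fun x : Spc n => lam⁻¹ • x)
      (lam⁻¹ • ContinuousLinearMap.id ℝ (Spc n)) y := (hasFDerivAt_id y).const_smul lam⁻¹
  have h2 := (((hg (lam⁻¹ • y)).hasFDerivAt.comp y h1).const_mul (lam ^ 2)).const_add (-2)
  have h3 := h2.sub_const c
  have h4 := h3.fderiv
  simp only [Function.comp_def] at h4
  rw [h4]
  simp
  field_simp

theorem aux_second {n : ℕ} (g : Spc n → ℝ) (hg : ContDiff ℝ (⊤ : ℕ∞) g) (lam c : ℝ)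
    (hl : 0 < lam) (y v : Spc n) :
    secondDerivAlong (fun x : Spc n => -2 + lam ^ 2 * g (lam⁻¹ • x) - c) y v
      = fderiv ℝ (fderiv ℝ g) (lam⁻¹ • y) v v := by
  unfold secondDerivAlong
  have hd : Differentiable ℝ g := hg.differentiable (by simp)
  have hd2 : Differentiable ℝ (fderiv ℝ g) :=
    (hg.fderiv_right (m := 1) aux_two).differentiable (by simp)
  have e : (fun y => fderiv ℝ (fun x : Spc n => -2 + lam ^ 2 * g (lam⁻¹ • x) - c) y v)
      = fun y => lam * fderiv ℝ g (lam⁻¹ • y) v := by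
    funext y; exact aux_fderiv g hd lam c hl y v
  rw [e]
  have h1 : HasFDerivAt (fun x : Spc n => lam⁻¹ • x)
      (lam⁻¹ • ContinuousLinearMap.id ℝ (Spc n)) y := (hasFDerivAt_id y).const_smul lam⁻¹
  have h2 := (hd2 (lam⁻¹ • y)).hasFDerivAt.comp y h1
  have h3 := (h2.clm_apply (hasFDerivAt_const v y)).const_mul lam
  have h4 := h3.fderiv
  simp only [Function.comp_def] at h4
  rw [h4]
  simp
  field_simp

theorem aux_spt {n : ℕ} (g : Spc n → ℝ) (hg : Differentiable ℝ g) (lam c : ℝ) (hl : 0 < lam)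
    (z w : Spt n) :
    fderiv ℝ (fun w : Spt n => -2 + lam ^ 2 * g (lam⁻¹ • w.2) - c * w.1) z w
      = lam * fderiv ℝ g (lam⁻¹ • z.2) w.2 - c * w.1 := by
  have h1 : HasFDerivAt (fun x : Spt n => lam⁻¹ • x.2)
      (lam⁻¹ • ContinuousLinearMap.snd ℝ ℝ (Spc n)) z := hasFDerivAt_snd.const_smul lam⁻¹
  have h2 := (((hg (lam⁻¹ • z.2)).hasFDerivAt.comp z h1).const_mul (lam ^ 2)).const_add (-2)
  have h3 := h2.sub ((hasFDerivAt_fst (𝕜 := ℝ) (p := z)).const_mul c)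
  have h4 := h3.fderiv
  simp only [Function.comp_def] at h4
  have h5 := congrArg (fun L => L w) h4
  refine Eq.trans h5 ?_
  simp
  field_simp

theorem aux_const (p Λ C D : ℝ) (hp : 2 < p) :
    ∃ K : ℝ, 0 < K ∧ K < 1 ∧ Λ * C ^ p * K ^ (p - 2) ≤ 1 / 16 ∧ K * D ≤ 1 / 16 := by
  have t1 : Tendsto (fun K : ℝ => Λ * C ^ p * K ^ (p - 2)) (𝓝[>] 0) (𝓝 0) := by
    have h : Continuous (fun K : ℝ => Λ * C ^ p * K ^ (p - 2)) :=
      continuous_const.mul (Real.continuous_rpow_const (by linarith))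
    have h2 := h.tendsto 0
    rw [Real.zero_rpow (by linarith), mul_zero] at h2
    exact h2.mono_left nhdsWithin_le_nhds
  have t2 : Tendsto (fun K : ℝ => K * D) (𝓝[>] 0) (𝓝 0) := by
    have h : Continuous (fun K : ℝ => K * D) := by fun_prop
    have h2 := h.tendsto 0
    rw [zero_mul] at h2
    exact h2.mono_left nhdsWithin_le_nhds
  have e1 := t1.eventually (eventually_le_nhds (by norm_num : (0 : ℝ) < 1 / 16))
  have e2 := t2.eventually (eventually_le_nhds (by norm_num : (0 : ℝ) < 1 / 16))
  have e3 : ∀ᶠ K : ℝ in 𝓝[>] 0, K ∈ Ioo (0 : ℝ) 1 := Ioo_mem_nhdsGT one_pos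
  obtain ⟨K, h1, h2, h3⟩ := (e1.and (e2.and e3)).exists
  exact ⟨K, h3.1, h3.2, h1, h2⟩

def auxG {n : ℕ} (g : Spc n → ℝ) (y : Spc n) : Spc n :=
  WithLp.toLp 2 (fun i => fderiv ℝ g y (EuclideanSpace.single i (1 : ℝ)))

theorem aux_G {n : ℕ} (g : Spc n → ℝ) (hs : HasCompactSupport g)
    (hg1 : ContDiff ℝ 1 (fderiv ℝ g)) : ∃ C : ℝ, ∀ y, ‖auxG g y‖ ≤ C := by
  have hGc : Continuous (auxG g) := by
    refine (PiLp.continuous_toLp 2 _).comp (continuous_pi fun i => ?_)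
    exact hg1.continuous.clm_apply continuous_const
  have hGs : HasCompactSupport (auxG g) := by
    refine (hs.fderiv (𝕜 := ℝ)).mono ?_
    intro y hy h0
    apply hy
    ext i
    have h0' : fderiv ℝ g y = 0 := h0
    simp [auxG, h0']
  exact hGs.exists_bound_of_continuous hGc

theorem aux_D0 {E F : Type*} [NormedAddCommGroup E] [NormedSpace ℝ E] [NormedAddCommGroup F]
    [NormedSpace ℝ F] (h : E → F) (hs : HasCompactSupport h)
    (hg1 : ContDiff ℝ 1 h) : ∃ D : ℝ, ∀ y, ‖fderiv ℝ h y‖ ≤ D :=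
  (hs.fderiv (𝕜 := ℝ)).exists_bound_of_continuous (hg1.continuous_fderiv (by simp))

theorem aux_D {E : Type*} [NormedAddCommGroup E] [NormedSpace ℝ E] (g : E → ℝ)
    (hs : HasCompactSupport g) (hg1 : ContDiff ℝ 1 (fderiv ℝ g)) :
    ∃ D : ℝ, 0 ≤ D ∧ ∀ y v, ‖v‖ = 1 → |fderiv ℝ (fderiv ℝ g) y v v| ≤ D := by
  obtain ⟨D, hD⟩ := aux_D0 (fderiv ℝ g) (hs.fderiv (𝕜 := ℝ)) hg1
  refine ⟨D, (norm_nonneg _).trans (hD 0), fun y v hv => ?_⟩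
  have := (fderiv ℝ (fderiv ℝ g) y).le_opNorm₂ v v
  rw [hv, mul_one, mul_one] at this
  exact this.trans (hD _)

/-- **The barrier is a subsolution.** For a smooth profile `β : [0,∞) → ℝ` supported in
`[0,1]` and `≡ 1` on `[0,1/2]`, there is `K₀ ∈ (0,1)` depending only on `Λ, p, n, β` such
that for `0 < λ ≤ K₀` and `0 ≤ Λ₀ ≤ λ²K₀` the barrier
`σ(t,x) = −2 + λ²β(|x|/λ) − (λ²/8)t` satisfies pointwise
`∂ₜσ + Λ|∇σ|^p − Λ₀ m⁻(D²σ) ≤ 0` on `ℝ × ℝⁿ`. -/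
theorem barrier_is_subsolution
    (n : ℕ) (hn : 1 ≤ n) (p Λ : ℝ) (hp : 2 < p) (hΛ : 0 < Λ)
    (B : ℝ → ℝ) (hB : ContDiffOn ℝ (⊤ : ℕ∞) B (Ici 0))
    (hB1 : ∀ r ∈ Icc (0 : ℝ) (1 / 2), B r = 1)
    (hB0 : ∀ r : ℝ, 1 < r → B r = 0) :
    ∃ K₀ : ℝ, 0 < K₀ ∧ K₀ < 1 ∧
      ∀ (lam Λ₀ : ℝ), 0 < lam → lam ≤ K₀ → 0 ≤ Λ₀ → Λ₀ ≤ lam ^ 2 * K₀ →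
        ∀ z : Spt n,
          timeDeriv (fun w : Spt n =>
              -2 + lam ^ 2 * B (‖w.2‖ / lam) - lam ^ 2 / 8 * w.1) z
            + Λ * ‖spaceGrad (fun w : Spt n =>
                -2 + lam ^ 2 * B (‖w.2‖ / lam) - lam ^ 2 / 8 * w.1) z‖ ^ p
            - Λ₀ * mMinusOf (fun x : Spc n =>
                -2 + lam ^ 2 * B (‖x‖ / lam) - lam ^ 2 / 8 * z.1) z.2
          ≤ 0 := by
  obtain ⟨g, hgdef, hg, hs⟩ : ∃ g : Spc n → ℝ, (∀ y, g y = B ‖y‖) ∧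
      ContDiff ℝ (⊤ : ℕ∞) g ∧ HasCompactSupport g :=
    ⟨fun y => B ‖y‖, fun _ => rfl, aux_smooth B hB hB1, aux_supp B hB0⟩
  have hd : Differentiable ℝ g := hg.differentiable (by simp)
  have hg1 : ContDiff ℝ 1 (fderiv ℝ g) := hg.fderiv_right aux_two
  obtain ⟨D, hD0, hD⟩ := aux_D g hs hg1
  obtain ⟨C, hC⟩ := aux_G g hs hg1
  have hC0 : 0 ≤ C := (norm_nonneg _).trans (hC 0)
  obtain ⟨K, hK0, hK1, hKC, hKD⟩ := aux_const p Λ C D hp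
  refine ⟨K, hK0, hK1, ?_⟩
  intro lam Λ₀ hl hlK hΛ0 hΛK z
  have hn' : ∀ x : Spc n, B (‖x‖ / lam) = g (lam⁻¹ • x) := by
    intro x
    simp only [hgdef, norm_smul, norm_inv, Real.norm_eq_abs, abs_of_pos hl]
    rw [div_eq_inv_mul]
  simp only [hn']
  have ht : timeDeriv (fun w : Spt n =>
      -2 + lam ^ 2 * g (lam⁻¹ • w.2) - lam ^ 2 / 8 * w.1) z = - (lam ^ 2 / 8) := by
    unfold timeDeriv
    rw [aux_spt g hd lam _ hl]
    simp
  have hgr : spaceGrad (fun w : Spt n =>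
      -2 + lam ^ 2 * g (lam⁻¹ • w.2) - lam ^ 2 / 8 * w.1) z = lam • auxG g (lam⁻¹ • z.2) := by
    unfold spaceGrad
    ext i
    simp only [aux_spt g hd lam _ hl]
    simp [auxG]
  have hm := aux_mMinus (fun x : Spc n => -2 + lam ^ 2 * g (lam⁻¹ • x) - lam ^ 2 / 8 * z.1) z.2
    D hD0 (by
      intro v hv
      rw [aux_second g hg lam _ hl]
      exact hD _ v hv)
  rw [ht, hgr, norm_smul, Real.norm_eq_abs, abs_of_pos hl]
  have hp1 : (lam * ‖auxG g (lam⁻¹ • z.2)‖) ^ p ≤ (lam * C) ^ p :=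
    Real.rpow_le_rpow (by positivity) (by gcongr; exact hC _) (by linarith)
  have hp2 : (lam * C) ^ p = C ^ p * (lam ^ (p - 2) * lam ^ 2) := by
    rw [Real.mul_rpow hl.le hC0, mul_comm, ← Real.rpow_natCast lam 2, ← Real.rpow_add hl]
    norm_num
  have hp3 : lam ^ (p - 2) ≤ K ^ (p - 2) := Real.rpow_le_rpow hl.le hlK (by linarith)
  have hCp : 0 ≤ C ^ p := Real.rpow_nonneg hC0 p
  have b1 : Λ * (lam * ‖auxG g (lam⁻¹ • z.2)‖) ^ p ≤ lam ^ 2 * (1 / 16) := by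
    calc Λ * (lam * ‖auxG g (lam⁻¹ • z.2)‖) ^ p ≤ Λ * (C ^ p * (lam ^ (p - 2) * lam ^ 2)) := by
          rw [← hp2]; gcongr
      _ ≤ Λ * (C ^ p * (K ^ (p - 2) * lam ^ 2)) := by gcongr
      _ = lam ^ 2 * (Λ * C ^ p * K ^ (p - 2)) := by ring
      _ ≤ _ := by gcongr
  have b2 : Λ₀ * D ≤ lam ^ 2 * (1 / 16) := by
    calc Λ₀ * D ≤ lam ^ 2 * K * D := by gcongr
      _ = lam ^ 2 * (K * D) := by ring
      _ ≤ _ := by gcongr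
  have b3 := mul_le_mul_of_nonneg_left hm hΛ0
  linarith
end
end

section
/- Let a < b, c > 0, C ≥ 0, and let H: [a,b] → [0,∞) be a function such that H(t) ≤ H(s) + C·(t−s) for all a ≤ s ≤ t ≤ b, and such that for almost every t ∈ [a,b] either H(t) = 0 or H(t) ≥ c. If H(s₀) = 0 for some s₀ ∈ [a,b], then H(t) = 0 for every t ∈ [s₀, b]. -/
open MeasureTheory Set

/-- **Propagation of vanishing.** If `H : [a,b] → [0,∞)` satisfies the one-sided bound
`H(t) ≤ H(s) + C(t−s)` for all `a ≤ s ≤ t ≤ b` and almost everywhere the dichotomy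
`H(t) = 0` or `H(t) ≥ c` (with `c > 0`), then `H(s₀) = 0` forces `H ≡ 0` on `[s₀,b]`. -/
theorem vanishing_propagates
    (a b c C : ℝ) (H : ℝ → ℝ)
    (hab : a < b) (hc : 0 < c) (hC : 0 ≤ C)
    (hnonneg : ∀ t ∈ Icc a b, 0 ≤ H t)
    (hlip : ∀ s t, a ≤ s → s ≤ t → t ≤ b → H t ≤ H s + C * (t - s))
    (hdich : ∀ᵐ t ∂volume.restrict (Icc a b), H t = 0 ∨ c ≤ H t)
    (s₀ : ℝ) (hs₀ : s₀ ∈ Icc a b) (hH : H s₀ = 0) :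
    ∀ t ∈ Icc s₀ b, H t = 0 := by
  have hdich' := (ae_restrict_iff' measurableSet_Icc).1 hdich
  have hdense : ∀ u v : ℝ, u < v → ∃ r ∈ Ioo u v, (r ∈ Icc a b → H r = 0 ∨ c ≤ H r) := by
    intro u v huv
    by_contra! hcon
    have h0 : volume (Ioo u v) = 0 := by
      refine measure_mono_null ?_ (ae_iff.1 hdich')
      intro r hr
      obtain ⟨h1, h2, h3⟩ := hcon r hr
      simp only [mem_setOf_eq]
      intro h
      rcases h h1 with h | h
      · exact h2 h
      · linarith
    rw [Real.volume_Ioo, ENNReal.ofReal_eq_zero] at h0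
    linarith
  have hstep : ∀ s t, a ≤ s → s ≤ t → t ≤ b → H s = 0 → C * (t - s) < c → H t = 0 := by
    intro s t has hst htb hs hlt
    rcases hst.eq_or_lt with rfl | hst'
    · exact hs
    refine le_antisymm ?_ (hnonneg t ⟨has.trans hst, htb⟩)
    refine le_of_forall_pos_le_add fun ε hε => ?_
    have hC1 : 0 < C + 1 := by linarith
    have hd : 0 < ε / (C + 1) := div_pos hε hC1
    obtain ⟨r, ⟨hr1, hr2⟩, hr⟩ := hdense (max s (t - ε / (C + 1))) t
      (max_lt hst' (by linarith))
    have hsr : s < r := (le_max_left _ _).trans_lt hr1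
    have her : t - ε / (C + 1) < r := (le_max_right _ _).trans_lt hr1
    have hr0 : H r = 0 := by
      rcases hr ⟨by linarith, by linarith⟩ with h | h
      · exact h
      · have h1 := hlip s r has hsr.le (by linarith)
        have h2 : C * (r - s) ≤ C * (t - s) := mul_le_mul_of_nonneg_left (by linarith) hC
        linarith
    have h1 := hlip r t (by linarith) hr2.le htb
    have h2 : (C + 1) * (t - r) ≤ (C + 1) * (ε / (C + 1)) :=
      mul_le_mul_of_nonneg_left (by linarith) hC1.le
    rw [mul_div_cancel₀ _ hC1.ne'] at h2
    linarith
  have hC1 : 0 < C + 1 := by linarith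
  set δ := c / (C + 1) with hδ
  have hδ0 : 0 < δ := div_pos hc hC1
  have hδ1 : C * δ + δ = c := by rw [hδ]; field_simp
  have hind : ∀ n : ℕ, ∀ t ∈ Icc s₀ b, t ≤ s₀ + n * δ → H t = 0 := by
    intro n
    induction n with
    | zero =>
      intro t ht h
      have : t = s₀ := le_antisymm (by simpa using h) ht.1
      rw [this, hH]
    | succ k ih =>
      intro t ht h
      push_cast at h
      have hk : 0 ≤ (k : ℝ) * δ := by positivity
      by_cases htk : t ≤ s₀ + k * δ
      · exact ih t ht htk
      · push Not at htk
        refine hstep (s₀ + k * δ) t (by linarith [hs₀.1]) htk.le ht.2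
          (ih _ ⟨by linarith, by linarith [ht.2]⟩ le_rfl) ?_
        have : C * (t - (s₀ + k * δ)) ≤ C * δ := mul_le_mul_of_nonneg_left (by linarith) hC
        linarith
  intro t ht
  obtain ⟨n, hn⟩ := exists_nat_ge ((t - s₀) / δ)
  rw [div_le_iff₀ hδ0] at hn
  exact hind n t ht (by linarith)
end
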